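/- arXiv:1506.06922 — 2 statements merged into one kernel-verified Lean document; each statement's English description precedes it below -/
import Mathlib

section
/- A continuous function f : (0,∞) → (0,∞) is operator monotone if and only if its adjoint f*, defined by f*(x) = 1/f(1/x) for x > 0, is operator monotone. -/
open Matrix
open scoped ComplexOrder

/-- The Loewner order on matrices: `A ≤ B` iff `B - A` is positive semidefinite. -/
def MLE {n : ℕ} (A B : Matrix (Fin n) (Fin n) ℂ) : Prop := (B - A).PosSemidef

/-- The `t`-weighted harmonic mean `A !_t B = ((1-t)A⁻¹ + tB⁻¹)⁻¹`. -/
noncomputable def wharm {n : ℕ} (t : ℝ) (A B : Matrix (Fin n) (Fin n) ℂ) :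
    Matrix (Fin n) (Fin n) ℂ := ((1 - t) • A⁻¹ + t • B⁻¹)⁻¹

/-- The `t`-weighted arithmetic mean `A ∇_t B = (1-t)A + tB`. -/
noncomputable def warith {n : ℕ} (t : ℝ) (A B : Matrix (Fin n) (Fin n) ℂ) :
    Matrix (Fin n) (Fin n) ℂ := (1 - t) • A + t • B

/-- Real powers of a matrix, via the continuous functional calculus. -/
noncomputable def mpow {n : ℕ} (A : Matrix (Fin n) (Fin n) ℂ) (r : ℝ) :
    Matrix (Fin n) (Fin n) ℂ := cfc (fun x : ℝ => x ^ r) A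

/-- The `t`-weighted geometric mean `A #_t B = A^{1/2} (A^{-1/2} B A^{-1/2})^t A^{1/2}`. -/
noncomputable def wgeom {n : ℕ} (t : ℝ) (A B : Matrix (Fin n) (Fin n) ℂ) :
    Matrix (Fin n) (Fin n) ℂ :=
  mpow A (1/2) * mpow (mpow A (-(1/2)) * B * mpow A (-(1/2))) t * mpow A (1/2)

/-- `f` is operator monotone (increasing): order preserving on positive definite
matrices of every size, via the continuous functional calculus. -/
def OperatorMonotone (f : ℝ → ℝ) : Prop :=
  ∀ (n : ℕ) (A B : Matrix (Fin n) (Fin n) ℂ), A.PosDef → B.PosDef →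
    MLE A B → MLE (cfc f A) (cfc f B)

/-- `f` is operator monotone decreasing: order reversing on positive definite
matrices of every size, via the continuous functional calculus. -/
def OperatorAntitone (f : ℝ → ℝ) : Prop :=
  ∀ (n : ℕ) (A B : Matrix (Fin n) (Fin n) ℂ), A.PosDef → B.PosDef →
    MLE A B → MLE (cfc f B) (cfc f A)

/-!
Inversion reverses the Loewner order on positive definite matrices, and `f*(A) = f(A⁻¹)⁻¹` by the
functional calculus. Hence `A ↦ f*(A)` is the order-preserving map `A ↦ f(A)` conjugated by an
order-reversing one, so it preserves the order; the converse follows from `f** = f`. Spectra of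
matrices are finite, so every function is continuous on them and the functional calculus applies.
-/

/-- The adjoint `f*(x) = 1 / f(1/x)` of a function `f` on `(0, ∞)`, extended to all of `ℝ` with the
convention `0⁻¹ = 0`; only its values on `(0, ∞)` are meaningful. -/
noncomputable def adjointFun (f : ℝ → ℝ) : ℝ → ℝ := fun x => (f x⁻¹)⁻¹

theorem adjointFun_adjointFun (f : ℝ → ℝ) : adjointFun (adjointFun f) = f := by
  funext x
  simp only [adjointFun, inv_inv]

theorem adjointFun_pos {f : ℝ → ℝ} (hf : ∀ x, 0 < x → 0 < f x) (x : ℝ) (hx : 0 < x) :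
    0 < adjointFun f x :=
  inv_pos.mpr (hf x⁻¹ (inv_pos.mpr hx))

section InverseOrder

variable {K ι : Type*} [Field K] [PartialOrder K] [StarRing K] [StarOrderedRing K]
  [Fintype ι] [DecidableEq ι] {A B : Matrix ι ι K}

-- Both sides are Schur complement criteria for positivity of the block matrix `[[A⁻¹, 1], [1, B]]`.
theorem posSemidef_inv_sub_inv_iff (hA : A.PosDef) (hB : B.PosDef) :
    (A⁻¹ - B⁻¹).PosSemidef ↔ (B - A).PosSemidef := by
  let := hA.inv.isUnit.invertible
  let := hB.isUnit.invertible
  have inv_inv_A : A⁻¹⁻¹ = A := nonsing_inv_nonsing_inv A ((isUnit_iff_isUnit_det A).mp hA.isUnit)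
  calc (A⁻¹ - B⁻¹).PosSemidef
      ↔ (fromBlocks A⁻¹ 1 1ᴴ B).PosSemidef := by
        simpa only [conjTranspose_one, Matrix.one_mul, Matrix.mul_one] using
          (PosDef.fromBlocks₂₂ A⁻¹ 1 hB).symm
    _ ↔ (B - A).PosSemidef := by
        simpa only [conjTranspose_one, Matrix.one_mul, Matrix.mul_one, inv_inv_A] using
          PosDef.fromBlocks₁₁ 1 B hA.inv

end InverseOrder

section FunctionalCalculus

variable {𝕜 ι : Type*} [RCLike 𝕜] [Fintype ι] [DecidableEq ι] {A : Matrix ι ι 𝕜}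

open scoped MatrixOrder in
theorem posDef_iff_spectrum_pos (hA : A.IsHermitian) :
    A.PosDef ↔ ∀ x ∈ spectrum ℝ A, 0 < x := by
  rw [← isStrictlyPositive_iff_posDef]
  exact StarOrderedRing.isStrictlyPositive_iff_spectrum_pos A hA

theorem posDef_cfc_iff (hA : A.IsHermitian) {f : ℝ → ℝ} :
    (cfc f A).PosDef ↔ ∀ x ∈ spectrum ℝ A, 0 < f x := by
  have cfc_isHermitian : (cfc f A).IsHermitian := cfc_predicate f A
  have spectral_mapping : spectrum ℝ (cfc f A) = f '' spectrum ℝ A :=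
    cfc_map_spectrum f A hA (A.finite_real_spectrum.continuousOn f)
  rw [posDef_iff_spectrum_pos cfc_isHermitian, spectral_mapping, Set.forall_mem_image]

theorem cfc_adjointFun (hA : A.IsHermitian) (hA_unit : IsUnit A) {f : ℝ → ℝ}
    (hf : ∀ x ∈ spectrum ℝ A, f x⁻¹ ≠ 0) :
    cfc (adjointFun f) A = (cfc f A⁻¹)⁻¹ := by
  have cfc_comp_inv_eq : cfc (fun x => f x⁻¹) A = cfc f A⁻¹ := by
    rw [← hA_unit.unit_spec, ← coe_units_inv]
    exact cfc_comp_inv f hA_unit.unit ((A.finite_real_spectrum.image _).continuousOn f) hA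
  rw [nonsing_inv_eq_ringInverse, ← cfc_comp_inv_eq]
  exact cfc_inv _ A hf (A.finite_real_spectrum.continuousOn _) hA

end FunctionalCalculus

theorem operatorMonotone_adjointFun {f : ℝ → ℝ} (hf : ∀ x, 0 < x → 0 < f x)
    (hmono : OperatorMonotone f) : OperatorMonotone (adjointFun f) := by
  intro n A B hA hB hAB
  have spectrum_pos {C : Matrix (Fin n) (Fin n) ℂ} (hC : C.PosDef) : ∀ x ∈ spectrum ℝ C, 0 < x :=
    (posDef_iff_spectrum_pos hC.isHermitian).mp hC
  have cfc_inv_posDef {C : Matrix (Fin n) (Fin n) ℂ} (hC : C.PosDef) : (cfc f C⁻¹).PosDef :=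
    (posDef_cfc_iff hC.inv.isHermitian).mpr fun x hx => hf x (spectrum_pos hC.inv x hx)
  have cfc_adjointFun_eq {C : Matrix (Fin n) (Fin n) ℂ} (hC : C.PosDef) :
      cfc (adjointFun f) C = (cfc f C⁻¹)⁻¹ :=
    cfc_adjointFun hC.isHermitian hC.isUnit fun x hx =>
      (hf x⁻¹ (inv_pos.mpr (spectrum_pos hC x hx))).ne'
  have inv_le : MLE B⁻¹ A⁻¹ := (posSemidef_inv_sub_inv_iff hA hB).mpr hAB
  have cfc_inv_le : MLE (cfc f B⁻¹) (cfc f A⁻¹) := hmono n B⁻¹ A⁻¹ hB.inv hA.inv inv_le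
  rw [cfc_adjointFun_eq hA, cfc_adjointFun_eq hB]
  exact (posSemidef_inv_sub_inv_iff (cfc_inv_posDef hB) (cfc_inv_posDef hA)).mpr cfc_inv_le

theorem stmt_0_general (f : ℝ → ℝ) (hf : ∀ x, 0 < x → 0 < f x) :
    OperatorMonotone f ↔ OperatorMonotone (adjointFun f) := by
  refine ⟨operatorMonotone_adjointFun hf, fun hmono => ?_⟩
  simpa only [adjointFun_adjointFun] using operatorMonotone_adjointFun (adjointFun_pos hf) hmono

theorem stmt_0 (f : ℝ → ℝ) (hf : ContinuousOn f (Set.Ioi 0))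
    (hf' : ∀ x ∈ Set.Ioi (0:ℝ), f x ∈ Set.Ioi (0:ℝ)) :
    OperatorMonotone f ↔ OperatorMonotone (fun x => (f x⁻¹)⁻¹) :=
  stmt_0_general f hf'
end

section
/- A continuous function f : (0,∞) → (0,∞) is operator monotone if and only if f(A ∇ B) ≥ f(A) # f(B) for every n ∈ ℕ and all n×n positive definite complex matrices A, B. -/
open Matrix
open scoped ComplexOrder

/-!
If `f` is operator monotone, it is operator concave: an isometry `V` and a positive definite `T`
satisfy `Vᴴ f(T) V ≤ f((1 + ε) Vᴴ T V)`, because `T` lies below a matrix that leaves the range of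
`V` invariant and restricts to `(1 + ε) Vᴴ T V` there. Compressing `diag (A, B)` gives
`f(A) ∇ f(B) ≤ f((1 + ε)(A ∇ B))`, and the scalar case bounds `f (c x)` by `c f x` for `c ≥ 1`, so
`ε` can be removed. The arithmetic-geometric mean inequality finishes this direction.

Conversely, inverting `f(A) # f(B) ≤ f(A ∇ B)` shows that `g = 1 / f` is operator midpoint convex
and that `g` is midpoint log-convex on scalars. A log-convex function that increases somewhere grows
exponentially, whereas convexity on one family of `2 × 2` matrices bounds `g` by a multiple of
`x ^ 2`; hence `g` is decreasing. For `D ≥ 0`, dyadic convexity gives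
`g(A + D) ≤ (1 - 2⁻ᵏ) g(A) + 2⁻ᵏ g(A + 2ᵏ D)`, where `g(A + 2ᵏ D)` stays bounded because `g` is
decreasing. Letting `k → ∞`, `g` is operator antitone, so `f` is operator monotone.
-/

/-! ### The Loewner order and the functional calculus of matrices -/

section

open scoped MatrixOrder

lemma mle_iff_le {n : ℕ} {A B : Matrix (Fin n) (Fin n) ℂ} : MLE A B ↔ A ≤ B := Iff.rfl

variable {ι κ : Type*}

lemma posDef_of_le {A B : Matrix ι ι ℂ} (hA : A.PosDef) (h : A ≤ B) : B.PosDef := by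
  simpa using hA.add_posSemidef (Matrix.le_iff.1 h)

lemma conj_le_conj [Finite ι] [Fintype κ] {A B : Matrix κ κ ℂ} (h : A ≤ B) (W : Matrix κ ι ℂ) :
    Wᴴ * A * W ≤ Wᴴ * B * W := by
  simpa [Matrix.le_iff, Matrix.mul_sub, Matrix.sub_mul]
    using (Matrix.le_iff.1 h).conjTranspose_mul_mul_same W

lemma conj_add_le [Finite ι] [Fintype κ] {T : Matrix κ κ ℂ} (hT : T.PosSemidef)
    (P Q : Matrix κ ι ℂ) {ε : ℝ} (hε : 0 < ε) :
    (P + Q)ᴴ * T * (P + Q) ≤ (1 + ε) • (Pᴴ * T * P) + (1 + ε⁻¹) • (Qᴴ * T * Q) := by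
  have sub_eq : (1 + ε) • (Pᴴ * T * P) + (1 + ε⁻¹) • (Qᴴ * T * Q) - (P + Q)ᴴ * T * (P + Q) =
      ε⁻¹ • ((ε • P - Q)ᴴ * T * (ε • P - Q)) := by
    simp only [Matrix.conjTranspose_add, Matrix.conjTranspose_sub, Matrix.conjTranspose_smul,
      Matrix.add_mul, Matrix.mul_add, Matrix.sub_mul, Matrix.mul_sub, Matrix.smul_mul,
      Matrix.mul_smul, star_trivial]
    match_scalars <;> field_simp <;> ring
  rw [Matrix.le_iff, sub_eq]
  exact (hT.conjTranspose_mul_mul_same _).smul (by positivity)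

lemma smul_one_le_smul_one_iff [Finite ι] [DecidableEq ι] [Nonempty ι] {a b : ℝ} :
    a • (1 : Matrix ι ι ℂ) ≤ b • (1 : Matrix ι ι ℂ) ↔ a ≤ b := by
  cases nonempty_fintype ι
  refine ⟨fun h ↦ ?_, fun h ↦ smul_le_smul_of_nonneg_right h Matrix.PosSemidef.one.nonneg⟩
  have := (Matrix.le_iff.1 h).diag_nonneg (i := Classical.arbitrary ι)
  simpa [Complex.le_def] using this

lemma diag_re_le_diag_re {A B : Matrix ι ι ℂ} (h : A ≤ B) (i : ι) :
    (A i i).re ≤ (B i i).re := by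
  simpa using (Complex.le_def.1 ((Matrix.le_iff.1 h).diag_nonneg (i := i))).1

lemma exists_le_smul_one [Finite ι] [DecidableEq ι] {A : Matrix ι ι ℂ} (hA : A.IsHermitian) :
    ∃ m : ℝ, A ≤ m • (1 : Matrix ι ι ℂ) := by
  cases nonempty_fintype ι
  obtain ⟨m, hm⟩ := A.finite_real_spectrum.bddAbove
  exact ⟨m, by
    simpa only [Algebra.algebraMap_eq_smul_one] using
      le_algebraMap_of_spectrum_le (fun x hx ↦ hm hx) hA.isSelfAdjoint⟩

lemma exists_pos_smul_one_le [Finite ι] [DecidableEq ι] {A : Matrix ι ι ℂ} (hA : A.PosDef) :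
    ∃ a : ℝ, 0 < a ∧ a • (1 : Matrix ι ι ℂ) ≤ A := by
  cases nonempty_fintype ι
  open scoped Matrix.Norms.L2Operator in
  cases isEmpty_or_nonempty ι
  · exact ⟨1, one_pos, (Subsingleton.elim _ _).le⟩
  simpa only [Algebra.algebraMap_eq_smul_one] using
    (CFC.exists_pos_algebraMap_le_iff hA.isHermitian.isSelfAdjoint).2
      fun x hx ↦ hA.isStrictlyPositive.spectrum_pos hx

lemma posDef_fromBlocks_zero [Finite ι] [Finite κ] {A : Matrix ι ι ℂ} {B : Matrix κ κ ℂ}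
    (hA : A.PosDef) (hB : B.PosDef) : (fromBlocks A 0 0 B).PosDef := by
  classical
  cases nonempty_fintype ι
  cases nonempty_fintype κ
  have := hA.isUnit.invertible
  have hAB : (fromBlocks A 0 0 B).PosSemidef := by
    simpa using (PosDef.fromBlocks₁₁ (0 : Matrix ι κ ℂ) B hA).2 (by simpa using hB.posSemidef)
  rw [hAB.posDef_iff_det_ne_zero, det_fromBlocks_zero₂₁]
  exact mul_ne_zero hA.det_pos.ne' hB.det_pos.ne'

variable [Fintype ι] [DecidableEq ι] [Fintype κ] [DecidableEq κ]

lemma continuousOn_spectrum (f : ℝ → ℝ) (A : Matrix ι ι ℂ) : ContinuousOn f (spectrum ℝ A) :=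
  A.finite_real_spectrum.continuousOn f

lemma inv_le_inv_of_posDef {A B : Matrix ι ι ℂ} (hA : A.PosDef) (h : A ≤ B) : B⁻¹ ≤ A⁻¹ := by
  open scoped Matrix.Norms.L2Operator in
  simpa only [Matrix.nonsing_inv_eq_ringInverse] using
    CStarAlgebra.ringInverse_le_ringInverse h hA.isStrictlyPositive

lemma cfc_posDef {f : ℝ → ℝ} (hf : ∀ x, 0 < x → 0 < f x) {A : Matrix ι ι ℂ} (hA : A.PosDef) :
    (cfc f A).PosDef :=
  ((cfc_isStrictlyPositive_iff f A (continuousOn_spectrum f A) hA.isHermitian.isSelfAdjoint).2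
    fun x hx ↦ hf x (hA.isStrictlyPositive.spectrum_pos hx)).posDef

lemma cfc_inv_of_posDef {f : ℝ → ℝ} (hf : ∀ x, 0 < x → 0 < f x) {A : Matrix ι ι ℂ}
    (hA : A.PosDef) : cfc (fun x ↦ (f x)⁻¹) A = (cfc f A)⁻¹ := by
  rw [Matrix.nonsing_inv_eq_ringInverse]
  exact cfc_inv f A (fun x hx ↦ (hf x (hA.isStrictlyPositive.spectrum_pos hx)).ne')
    (continuousOn_spectrum f A) hA.isHermitian.isSelfAdjoint

lemma cfc_smul_one (f : ℝ → ℝ) (a : ℝ) :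
    cfc f (a • (1 : Matrix ι ι ℂ)) = f a • (1 : Matrix ι ι ℂ) := by
  simpa only [Algebra.algebraMap_eq_smul_one] using cfc_algebraMap (A := Matrix ι ι ℂ) a f

lemma aeval_mul_eq_mul_aeval {A : Matrix ι ι ℂ} {B : Matrix κ κ ℂ} {W : Matrix κ ι ℂ}
    (h : B * W = W * A) (p : Polynomial ℝ) :
    Polynomial.aeval B p * W = W * Polynomial.aeval A p := by
  have pow_mul (k : ℕ) : B ^ k * W = W * A ^ k := by
    induction k with
    | zero => simp
    | succ k ih =>
      rw [pow_succ, Matrix.mul_assoc, h, ← Matrix.mul_assoc, ih, pow_succ, Matrix.mul_assoc]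
  induction p using Polynomial.induction_on' with
  | add p q hp hq => simp [Matrix.add_mul, Matrix.mul_add, hp, hq]
  | monomial k a =>
    simp [Polynomial.aeval_monomial, Algebra.algebraMap_eq_smul_one, pow_mul]

lemma cfc_mul_eq_mul_cfc (f : ℝ → ℝ) {A : Matrix ι ι ℂ} {B : Matrix κ κ ℂ}
    (hA : A.IsHermitian) (hB : B.IsHermitian) {W : Matrix κ ι ℂ} (h : B * W = W * A) :
    cfc f B * W = W * cfc f A := by
  classical
  let nodes : Finset ℝ := A.finite_real_spectrum.toFinset ∪ B.finite_real_spectrum.toFinset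
  let p : Polynomial ℝ := Lagrange.interpolate nodes id f
  have eval_p {x : ℝ} (hx : x ∈ nodes) : f x = p.eval x :=
    (Lagrange.eval_interpolate_at_node (v := id) f Function.injective_id.injOn hx).symm
  have cfc_A : cfc f A = Polynomial.aeval A p := by
    rw [← cfc_polynomial p A hA.isSelfAdjoint]
    exact cfc_congr fun x hx ↦ eval_p (by simp [nodes, hx])
  have cfc_B : cfc f B = Polynomial.aeval B p := by
    rw [← cfc_polynomial p B hB.isSelfAdjoint]
    exact cfc_congr fun x hx ↦ eval_p (by simp [nodes, hx])
  rw [cfc_A, cfc_B, aeval_mul_eq_mul_aeval h]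

lemma cfc_conj_mul (f : ℝ → ℝ) {A : Matrix ι ι ℂ} (hA : A.IsHermitian) {W : Matrix κ ι ℂ}
    (hW : Wᴴ * W = 1) : cfc f (W * A * Wᴴ) * W = W * cfc f A :=
  cfc_mul_eq_mul_cfc f hA (Matrix.isHermitian_mul_mul_conjTranspose W hA) (by
    rw [Matrix.mul_assoc, hW, Matrix.mul_one])

lemma cfc_le_smul_one_of_antitoneOn {g : ℝ → ℝ} (hg : AntitoneOn g (Set.Ioi 0)) {a : ℝ}
    (ha : 0 < a) {M : Matrix ι ι ℂ} (hM : M.IsHermitian) (h : a • (1 : Matrix ι ι ℂ) ≤ M) :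
    cfc g M ≤ g a • (1 : Matrix ι ι ℂ) := by
  rw [← Algebra.algebraMap_eq_smul_one] at h ⊢
  refine cfc_le_algebraMap g (g a) M (fun x hx ↦ ?_) (continuousOn_spectrum g M) hM.isSelfAdjoint
  have hax := (algebraMap_le_iff_le_spectrum hM.isSelfAdjoint).1 h x hx
  exact hg ha (ha.trans_le hax) hax

lemma cfc_affine {A : Matrix ι ι ℂ} (hA : A.IsHermitian) (c d : ℝ) :
    cfc (fun x ↦ c + d * x) A = c • (1 : Matrix ι ι ℂ) + d • A := by
  rw [cfc_const_add c (fun x ↦ d * x) A (continuousOn_spectrum _ A) hA.isSelfAdjoint,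
    cfc_const_mul_id d A hA.isSelfAdjoint, Algebra.algebraMap_eq_smul_one]

lemma cfc_nonsing_inv (f : ℝ → ℝ) {A : Matrix ι ι ℂ} (hA : A.PosDef) :
    cfc f A⁻¹ = cfc (fun x ↦ f x⁻¹) A := by
  have inv_eq : A⁻¹ = cfc (fun x : ℝ ↦ x⁻¹) A := by
    rw [cfc_inv_of_posDef (fun _ hx ↦ hx) hA, cfc_id' ℝ A hA.isHermitian.isSelfAdjoint]
  rw [inv_eq, ← cfc_comp' f (fun x ↦ x⁻¹) A ((A.finite_real_spectrum.image _).continuousOn _)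
    (continuousOn_spectrum _ A) hA.isHermitian.isSelfAdjoint]

lemma cfc_fromBlocks_zero (f : ℝ → ℝ) {A : Matrix ι ι ℂ} {B : Matrix κ κ ℂ}
    (hA : A.IsHermitian) (hB : B.IsHermitian) :
    cfc f (fromBlocks A 0 0 B) = fromBlocks (cfc f A) 0 0 (cfc f B) := by
  have hAB : (fromBlocks A 0 0 B).IsHermitian := hA.fromBlocks (by simp) hB
  let inl : Matrix (ι ⊕ κ) ι ℂ := fromRows 1 0
  let inr : Matrix (ι ⊕ κ) κ ℂ := fromRows 0 1
  have mul_inl : cfc f (fromBlocks A 0 0 B) * inl = inl * cfc f A :=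
    cfc_mul_eq_mul_cfc f hA hAB (by simp [inl, fromBlocks_mul_fromRows, fromRows_mul])
  have mul_inr : cfc f (fromBlocks A 0 0 B) * inr = inr * cfc f B :=
    cfc_mul_eq_mul_cfc f hB hAB (by simp [inr, fromBlocks_mul_fromRows, fromRows_mul])
  calc cfc f (fromBlocks A 0 0 B)
      = cfc f (fromBlocks A 0 0 B) * fromCols inl inr := by simp [inl, inr]
    _ = fromBlocks (cfc f A) 0 0 (cfc f B) := by
        rw [mul_fromCols, mul_inl, mul_inr]
        simp [inl, inr, fromRows_mul]

open Polynomial in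
lemma eq_or_eq_of_mem_spectrum {A : Matrix ι ι ℂ} {a b : ℝ}
    (h : (A - a • (1 : Matrix ι ι ℂ)) * (A - b • (1 : Matrix ι ι ℂ)) = 0) {x : ℝ}
    (hx : x ∈ spectrum ℝ A) : x = a ∨ x = b := by
  cases isEmpty_or_nonempty ι
  · simp [spectrum.of_subsingleton] at hx
  have aeval_eq_zero : aeval A ((X - C a) * (X - C b)) = 0 := by
    simpa [Algebra.algebraMap_eq_smul_one] using h
  have := spectrum.subset_polynomial_aeval A ((X - C a) * (X - C b)) ⟨x, hx, rfl⟩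
  simpa [aeval_eq_zero, sub_eq_zero] using this

lemma cfc_eq_of_mul_eq_zero (f : ℝ → ℝ) {A : Matrix ι ι ℂ} (hA : A.IsHermitian) {a b : ℝ}
    (hab : a ≠ b) (h : (A - a • (1 : Matrix ι ι ℂ)) * (A - b • (1 : Matrix ι ι ℂ)) = 0) :
    cfc f A = (f b / (b - a)) • (A - a • (1 : Matrix ι ι ℂ)) +
      (f a / (a - b)) • (A - b • (1 : Matrix ι ι ℂ)) := by
  have hab' : a - b ≠ 0 := sub_ne_zero.2 hab
  have hba' : b - a ≠ 0 := sub_ne_zero.2 hab.symm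
  have interpolation : Set.EqOn f
      (fun x ↦ -(f b / (b - a) * a + f a / (a - b) * b) + (f b / (b - a) + f a / (a - b)) * x)
      (spectrum ℝ A) := by
    intro x hx
    rcases eq_or_eq_of_mem_spectrum h hx with rfl | rfl <;> field_simp <;> ring
  rw [cfc_congr interpolation, cfc_affine hA]
  module

lemma cfc_diag_re_of_mul_eq_zero (f : ℝ → ℝ) {A : Matrix ι ι ℂ} (hA : A.IsHermitian)
    {a b : ℝ} (hab : a ≠ b)
    (h : (A - a • (1 : Matrix ι ι ℂ)) * (A - b • (1 : Matrix ι ι ℂ)) = 0) (i : ι) :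
    (cfc f A i i).re =
      f b / (b - a) * ((A i i).re - a) + f a / (a - b) * ((A i i).re - b) := by
  simp only [cfc_eq_of_mul_eq_zero f hA hab h, Matrix.add_apply, Matrix.smul_apply,
    Matrix.sub_apply, Matrix.one_apply_eq, Complex.add_re, Complex.sub_re, Complex.smul_re,
    Complex.one_re, smul_eq_mul, mul_one]

end

/-! ### Weighted geometric means -/

section

open scoped MatrixOrder

variable {n : ℕ} {A B : Matrix (Fin n) (Fin n) ℂ}

lemma warith_two_inv (A B : Matrix (Fin n) (Fin n) ℂ) :
    warith 2⁻¹ A B = (2⁻¹ : ℝ) • (A + B) := by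
  rw [warith]
  module

lemma mpow_posDef (hA : A.PosDef) (r : ℝ) : (mpow A r).PosDef :=
  cfc_posDef (fun _ hx ↦ Real.rpow_pos_of_pos hx r) hA

lemma mpow_mul_mpow (hA : A.PosDef) (r s : ℝ) : mpow A r * mpow A s = mpow A (r + s) := by
  unfold mpow
  rw [← cfc_mul _ _ A (continuousOn_spectrum _ A) (continuousOn_spectrum _ A)]
  exact cfc_congr fun x hx ↦ (Real.rpow_add (hA.isStrictlyPositive.spectrum_pos hx) r s).symm

lemma mpow_zero (hA : A.PosDef) : mpow A 0 = 1 := by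
  simpa [mpow] using cfc_affine hA.isHermitian 1 0

lemma mpow_one (hA : A.PosDef) : mpow A 1 = A := by
  simpa [mpow] using cfc_affine hA.isHermitian 0 1

lemma mpow_inv (hA : A.PosDef) (r : ℝ) : mpow A⁻¹ r = (mpow A r)⁻¹ := by
  unfold mpow
  rw [cfc_nonsing_inv _ hA, ← cfc_inv_of_posDef (fun _ hx ↦ Real.rpow_pos_of_pos hx r) hA]
  exact cfc_congr fun x hx ↦ Real.inv_rpow (hA.isStrictlyPositive.spectrum_pos hx).le r

lemma mpow_conj_posDef (hA : A.PosDef) (hB : B.PosDef) (r : ℝ) :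
    (mpow A r * B * mpow A r).PosDef := by
  have hr := mpow_posDef hA r
  simpa only [hr.isHermitian.eq] using hB.conjTranspose_mul_mul_same (B := mpow A r)
      (Matrix.mulVec_injective_iff_isUnit.2 hr.isUnit)

lemma mpow_conj_mpow_neg_conj (hA : A.PosDef) (r : ℝ) :
    mpow A r * (mpow A (-r) * B * mpow A (-r)) * mpow A r = B := by
  have mul_neg : mpow A r * mpow A (-r) = 1 := by
    rw [mpow_mul_mpow hA, add_neg_cancel, mpow_zero hA]
  have neg_mul : mpow A (-r) * mpow A r = 1 := by
    rw [mpow_mul_mpow hA, neg_add_cancel, mpow_zero hA]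
  calc mpow A r * (mpow A (-r) * B * mpow A (-r)) * mpow A r
      = mpow A r * mpow A (-r) * B * (mpow A (-r) * mpow A r) := by simp only [Matrix.mul_assoc]
    _ = B := by rw [mul_neg, neg_mul, Matrix.one_mul, Matrix.mul_one]

lemma wgeom_posDef (hA : A.PosDef) (hB : B.PosDef) (t : ℝ) : (wgeom t A B).PosDef :=
  mpow_conj_posDef hA (mpow_posDef (mpow_conj_posDef hA hB _) t) _

lemma mpow_le_warith_one (hA : A.PosDef) {t : ℝ} (ht0 : 0 ≤ t) (ht1 : t ≤ 1) :
    mpow A t ≤ warith t 1 A := by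
  rw [warith, ← cfc_affine hA.isHermitian]
  refine cfc_mono (fun x hx ↦ ?_) (continuousOn_spectrum _ A) (continuousOn_spectrum _ A)
  have hx0 := (hA.isStrictlyPositive.spectrum_pos hx).le
  simpa using Real.geom_mean_le_arith_mean2_weighted (sub_nonneg.2 ht1) ht0 zero_le_one hx0
    (sub_add_cancel 1 t)

theorem wgeom_le_warith (hA : A.PosDef) (hB : B.PosDef) {t : ℝ} (ht0 : 0 ≤ t) (ht1 : t ≤ 1) :
    wgeom t A B ≤ warith t A B := by
  have hP := (mpow_posDef hA (1 / 2)).isHermitian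
  have conj_one : mpow A (1 / 2) * 1 * mpow A (1 / 2) = A := by
    rw [Matrix.mul_one, mpow_mul_mpow hA, add_halves, mpow_one hA]
  calc wgeom t A B
      ≤ mpow A (1 / 2) * warith t 1 (mpow A (-(1 / 2)) * B * mpow A (-(1 / 2))) *
          mpow A (1 / 2) := by
        simpa only [wgeom, hP.eq] using conj_le_conj
          (mpow_le_warith_one (mpow_conj_posDef hA hB (-(1 / 2))) ht0 ht1) (mpow A (1 / 2))
    _ = warith t A B := by
        simp only [warith, Matrix.mul_add, Matrix.add_mul, Matrix.mul_smul, Matrix.smul_mul,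
          conj_one, mpow_conj_mpow_neg_conj hA]

theorem wgeom_inv (hA : A.PosDef) (hB : B.PosDef) (t : ℝ) :
    wgeom t A⁻¹ B⁻¹ = (wgeom t A B)⁻¹ := by
  have inner : mpow A⁻¹ (-(1 / 2)) * B⁻¹ * mpow A⁻¹ (-(1 / 2)) =
      (mpow A (-(1 / 2)) * B * mpow A (-(1 / 2)))⁻¹ := by
    simp only [mpow_inv hA, Matrix.mul_inv_rev, Matrix.mul_assoc]
  rw [wgeom, inner, mpow_inv (mpow_conj_posDef hA hB _), mpow_inv hA]
  simp only [wgeom, Matrix.mul_inv_rev, Matrix.mul_assoc]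

lemma rpow_half_mul_conj_rpow_mul_rpow_half {a b : ℝ} (ha : 0 < a) (hb : 0 < b) (t : ℝ) :
    a ^ (1 / 2 : ℝ) * (a ^ (-(1 / 2) : ℝ) * b * a ^ (-(1 / 2) : ℝ)) ^ t * a ^ (1 / 2 : ℝ) =
      a ^ (1 - t) * b ^ t := by
  have conj_eq : a ^ (-(1 / 2) : ℝ) * b * a ^ (-(1 / 2) : ℝ) = a ^ (-1 : ℝ) * b := by
    rw [mul_right_comm, ← Real.rpow_add ha]
    norm_num
  calc a ^ (1 / 2 : ℝ) * (a ^ (-(1 / 2) : ℝ) * b * a ^ (-(1 / 2) : ℝ)) ^ t * a ^ (1 / 2 : ℝ)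
      = a ^ (1 / 2 : ℝ) * a ^ (-1 * t) * a ^ (1 / 2 : ℝ) * b ^ t := by
        rw [conj_eq, Real.mul_rpow (by positivity) hb.le, ← Real.rpow_mul ha.le]
        ring
    _ = a ^ (1 - t) * b ^ t := by
        rw [← Real.rpow_add ha, ← Real.rpow_add ha]
        ring_nf

lemma wgeom_smul_one {a b : ℝ} (ha : 0 < a) (hb : 0 < b) (t : ℝ) :
    wgeom t (a • (1 : Matrix (Fin n) (Fin n) ℂ)) (b • (1 : Matrix (Fin n) (Fin n) ℂ)) =
      (a ^ (1 - t) * b ^ t) • 1 := by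
  simp only [wgeom, mpow, cfc_smul_one, Matrix.smul_mul, Matrix.mul_smul, Matrix.one_mul,
    smul_smul, ← rpow_half_mul_conj_rpow_mul_rpow_half ha hb t]
  ring_nf

end

/-! ### Operator monotone functions are operator concave -/

section

open scoped MatrixOrder

variable {f : ℝ → ℝ} {ι κ : Type*} [Fintype ι] [DecidableEq ι] [Fintype κ] [DecidableEq κ]

theorem OperatorMonotone.cfc_le_cfc (hf : OperatorMonotone f) {A B : Matrix ι ι ℂ}
    (hA : A.PosDef) (h : A ≤ B) : cfc f A ≤ cfc f B := by
  have hB := posDef_of_le hA h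
  let W : Matrix (Fin (Fintype.card ι)) ι ℂ :=
    (1 : Matrix ι ι ℂ).submatrix (Fintype.equivFin ι).symm id
  have hWW : Wᴴ * W = 1 := by
    simp [W, Matrix.conjTranspose_submatrix]
  have transport {C : Matrix ι ι ℂ} (hC : C.PosDef) :
      cfc f C = Wᴴ * cfc f (W * C * Wᴴ) * W := by
    rw [Matrix.mul_assoc, cfc_conj_mul f hC.isHermitian hWW, ← Matrix.mul_assoc, hWW,
      Matrix.one_mul]
  have conj_posDef {C : Matrix ι ι ℂ} (hC : C.PosDef) : (W * C * Wᴴ).PosDef := by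
    have : W * C * Wᴴ = C.submatrix (Fintype.equivFin ι).symm (Fintype.equivFin ι).symm := by
      ext i j
      simp [W, Matrix.mul_apply, Matrix.one_apply]
    rw [this]
    exact hC.submatrix (Fintype.equivFin ι).symm.injective
  have hW : W * A * Wᴴ ≤ W * B * Wᴴ := by simpa using conj_le_conj h Wᴴ
  rw [transport hA, transport hB]
  exact conj_le_conj (hf _ _ _ (conj_posDef hA) (conj_posDef hB) (mle_iff_le.2 hW)) W

theorem OperatorMonotone.conj_cfc_le (hf : OperatorMonotone f) {T : Matrix κ κ ℂ}
    (hT : T.PosDef) {V : Matrix κ ι ℂ} (hV : Vᴴ * V = 1) {ε : ℝ} (hε : 0 < ε) :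
    Vᴴ * cfc f T * V ≤ cfc f ((1 + ε) • (Vᴴ * T * V)) := by
  obtain ⟨m, hm⟩ := exists_le_smul_one hT.isHermitian
  -- `L` dominates `T` but, unlike `T`, leaves the range of `V` invariant.
  let P : Matrix κ κ ℂ := V * Vᴴ
  let L : Matrix κ κ ℂ := (1 + ε) • (Pᴴ * T * P) + (1 + ε⁻¹) • ((1 - P)ᴴ * (m • 1) * (1 - P))
  have hVTV : (Vᴴ * T * V).IsHermitian := Matrix.isHermitian_conjTranspose_mul_mul V hT.isHermitian
  have T_le : T ≤ L := calc
    T = (P + (1 - P))ᴴ * T * (P + (1 - P)) := by simp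
    _ ≤ (1 + ε) • (Pᴴ * T * P) + (1 + ε⁻¹) • ((1 - P)ᴴ * T * (1 - P)) :=
        conj_add_le hT.posSemidef P (1 - P) hε
    _ ≤ L := by
        have := conj_le_conj hm (1 - P)
        dsimp only [L]
        gcongr
  have P_mul : P * V = V := by rw [Matrix.mul_assoc, hV, Matrix.mul_one]
  have hP : Pᴴ = P := by simp [P]
  have L_mul : L * V = V * ((1 + ε) • (Vᴴ * T * V)) := by
    simp only [L, Matrix.add_mul, Matrix.smul_mul, Matrix.mul_assoc, Matrix.sub_mul, P_mul,
      Matrix.one_mul, sub_self, Matrix.mul_zero, smul_zero, add_zero, hP, Matrix.mul_smul]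
    simp only [P, Matrix.mul_assoc]
  have hL := posDef_of_le hT T_le
  calc Vᴴ * cfc f T * V ≤ Vᴴ * cfc f L * V := conj_le_conj (hf.cfc_le_cfc hT T_le) V
    _ = cfc f ((1 + ε) • (Vᴴ * T * V)) := by
        rw [Matrix.mul_assoc,
          cfc_mul_eq_mul_cfc f (hVTV.smul (IsSelfAdjoint.all _)) hL.isHermitian L_mul,
          ← Matrix.mul_assoc, hV, Matrix.one_mul]

variable {n : ℕ} {A B : Matrix (Fin n) (Fin n) ℂ}

lemma warith_posDef (hA : A.PosDef) (hB : B.PosDef) {t : ℝ} (ht0 : 0 < t) (ht1 : t < 1) :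
    (warith t A B).PosDef :=
  (hA.smul (sub_pos.2 ht1)).add (hB.smul ht0)

theorem OperatorMonotone.warith_cfc_le_cfc_smul_warith (hf : OperatorMonotone f) (hA : A.PosDef)
    (hB : B.PosDef) {t : ℝ} (ht0 : 0 ≤ t) (ht1 : t ≤ 1) {ε : ℝ} (hε : 0 < ε) :
    warith t (cfc f A) (cfc f B) ≤ cfc f ((1 + ε) • warith t A B) := by
  let V : Matrix (Fin n ⊕ Fin n) (Fin n) ℂ := fromRows (√(1 - t) • 1) (√t • 1)
  have conj_eq (C D : Matrix (Fin n) (Fin n) ℂ) :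
      Vᴴ * fromBlocks C 0 0 D * V = warith t C D := by
    simp [V, conjTranspose_fromRows_eq_fromCols_conjTranspose, fromCols_mul_fromBlocks,
      fromCols_mul_fromRows, warith, smul_smul, Real.mul_self_sqrt ht0,
      Real.mul_self_sqrt (sub_nonneg.2 ht1)]
  have hV : Vᴴ * V = 1 := by
    simpa [warith, ← add_smul] using conj_eq 1 1
  simpa only [cfc_fromBlocks_zero f hA.isHermitian hB.isHermitian, conj_eq] using
    hf.conj_cfc_le (posDef_fromBlocks_zero hA hB) hV hε

lemma warith_smul_one (t a b : ℝ) :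
    warith t (a • (1 : Matrix (Fin n) (Fin n) ℂ)) (b • (1 : Matrix (Fin n) (Fin n) ℂ)) =
      ((1 - t) * a + t * b) • 1 := by
  rw [warith]
  module

lemma OperatorMonotone.mul_apply_le (hf : OperatorMonotone f) (hpos : ∀ x, 0 < x → 0 < f x)
    {c t x : ℝ} (hc : 1 ≤ c) (hx : 0 < x) (ht : 0 < t) (htc : t * c < 1) :
    t * f (c * x) ≤ f x := by
  have ht1 : t < 1 := by nlinarith
  let ε : ℝ := (1 - t * c) / (1 + t * c)
  let a : ℝ := x * (1 - t * c) / (2 * (1 - t))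
  have htc0 : 0 < t * c := by positivity
  have hε : 0 < ε := div_pos (by linarith) (by linarith)
  have ha : 0 < a := div_pos (mul_pos hx (by linarith)) (by linarith)
  have hx_eq : (1 + ε) * ((1 - t) * a + t * (c * x)) = x := by
    have : 1 - t ≠ 0 := by linarith
    have : 1 + t * c ≠ 0 := by linarith
    simp only [ε, a]
    field_simp
    ring
  have hconcave : (1 - t) * f a + t * f (c * x) ≤ f x := by
    have := hf.warith_cfc_le_cfc_smul_warith (A := a • (1 : Matrix (Fin 1) (Fin 1) ℂ))
      (B := (c * x) • 1) (Matrix.PosDef.one.smul ha) (Matrix.PosDef.one.smul (by positivity))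
      ht.le ht1.le hε
    simpa only [cfc_smul_one, warith_smul_one, smul_smul, hx_eq, smul_one_le_smul_one_iff]
      using this
  have : 0 ≤ (1 - t) * f a := mul_nonneg (by linarith) (hpos a ha).le
  linarith

lemma OperatorMonotone.apply_mul_le (hf : OperatorMonotone f) (hpos : ∀ x, 0 < x → 0 < f x)
    {c x : ℝ} (hc : 1 ≤ c) (hx : 0 < x) : f (c * x) ≤ c * f x := by
  have hc0 : 0 < c := by linarith
  have hfc := hpos (c * x) (by positivity)
  by_contra! h
  obtain ⟨t, hlt, htc⟩ : ∃ t, f x / f (c * x) < t ∧ t < 1 / c :=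
    exists_between ((div_lt_div_iff₀ hfc hc0).2 (by linarith))
  have ht : 0 < t := (div_pos (hpos x hx) hfc).trans hlt
  have := hf.mul_apply_le hpos hc hx ht ((lt_div_iff₀ hc0).1 htc)
  exact absurd ((div_lt_iff₀ hfc).1 hlt) this.not_gt

lemma OperatorMonotone.cfc_smul_le (hf : OperatorMonotone f) (hpos : ∀ x, 0 < x → 0 < f x)
    {c : ℝ} (hc : 1 ≤ c) {M : Matrix ι ι ℂ} (hM : M.PosDef) :
    cfc f (c • M) ≤ c • cfc f M := by
  rw [← cfc_comp_const_mul c f M ((M.finite_real_spectrum.image _).continuousOn _)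
    hM.isHermitian.isSelfAdjoint, ← cfc_const_mul c f M (continuousOn_spectrum f M)]
  exact cfc_mono (fun x hx ↦ hf.apply_mul_le hpos hc (hM.isStrictlyPositive.spectrum_pos hx))
    (continuousOn_spectrum _ M) (continuousOn_spectrum _ M)

theorem OperatorMonotone.warith_cfc_le_cfc_warith (hf : OperatorMonotone f)
    (hpos : ∀ x, 0 < x → 0 < f x) (hA : A.PosDef) (hB : B.PosDef) {t : ℝ} (ht0 : 0 < t)
    (ht1 : t < 1) : warith t (cfc f A) (cfc f B) ≤ cfc f (warith t A B) := by
  open scoped Matrix.Norms.L2Operator in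
  have bound : ∀ᶠ ε : ℝ in nhdsWithin 0 (Set.Ioi 0),
      warith t (cfc f A) (cfc f B) ≤ (1 + ε) • cfc f (warith t A B) := by
    filter_upwards [self_mem_nhdsWithin] with ε (hε : 0 < ε)
    exact (hf.warith_cfc_le_cfc_smul_warith hA hB ht0.le ht1.le hε).trans
      (hf.cfc_smul_le hpos (by linarith) (warith_posDef hA hB ht0 ht1))
  refine ge_of_tendsto (tendsto_nhdsWithin_of_tendsto_nhds ?_) bound
  exact Continuous.tendsto' (by fun_prop) _ _ (by simp)

end

/-! ### Midpoint log-convexity and growth -/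

lemma div_pow_mul_le_of_sq_le_mul {u : ℕ → ℝ} (hpos : ∀ k, 0 < u k)
    (hu : ∀ k, u (k + 1) ^ 2 ≤ u k * u (k + 2)) (k : ℕ) : (u 1 / u 0) ^ k * u 0 ≤ u k := by
  have ratio_mul_le (k : ℕ) : u 1 / u 0 * u k ≤ u (k + 1) := by
    induction k with
    | zero => exact (div_mul_cancel₀ _ (hpos 0).ne').le
    | succ k ih =>
      refine le_of_mul_le_mul_left ?_ (hpos k)
      calc u k * (u 1 / u 0 * u (k + 1)) = u 1 / u 0 * u k * u (k + 1) := by ring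
        _ ≤ u (k + 1) * u (k + 1) := mul_le_mul_of_nonneg_right ih (hpos _).le
        _ ≤ u k * u (k + 2) := by simpa only [sq] using hu k
  induction k with
  | zero => simp
  | succ k ih =>
    calc (u 1 / u 0) ^ (k + 1) * u 0 = u 1 / u 0 * ((u 1 / u 0) ^ k * u 0) := by ring
      _ ≤ u 1 / u 0 * u k := mul_le_mul_of_nonneg_left ih (div_pos (hpos 1) (hpos 0)).le
      _ ≤ u (k + 1) := ratio_mul_le k

open Asymptotics Filter in
theorem antitoneOn_of_midpoint_sq_le_mul_of_isBigO {g : ℝ → ℝ} (hpos : ∀ x, 0 < x → 0 < g x)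
    (hg : ∀ x y, 0 < x → 0 < y → g ((x + y) / 2) ^ 2 ≤ g x * g y) {m : ℕ}
    (hO : g =O[atTop] fun x ↦ x ^ m) : AntitoneOn g (Set.Ioi 0) := by
  intro x (hx : 0 < x) y _ hxy
  by_contra! hlt
  have hxy' : 0 < y - x := sub_pos.2 (hxy.lt_of_ne (by rintro rfl; exact hlt.false))
  let u (k : ℕ) : ℝ := g (x + k * (y - x))
  let r : ℝ := u 1 / u 0
  have hr : 1 < r := by simpa [r, u, one_lt_div (hpos x hx)] using hlt
  have pow_mul_le (k : ℕ) : r ^ k * u 0 ≤ u k := by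
    refine div_pow_mul_le_of_sq_le_mul (u := u) (fun j ↦ hpos _ (by positivity)) (fun j ↦ ?_) k
    convert hg (x + j * (y - x)) (x + (j + 2 : ℕ) * (y - x)) (by positivity) (by positivity)
      using 3
    push_cast
    ring
  have u_isBigO : u =O[atTop] fun k : ℕ ↦ (k : ℝ) ^ m := by
    have arg_tendsto : Tendsto (fun k : ℕ ↦ x + k * (y - x)) atTop atTop :=
      tendsto_atTop_add_const_left _ x (tendsto_natCast_atTop_atTop.atTop_mul_const hxy')
    have arg_isBigO : (fun k : ℕ ↦ x + k * (y - x)) =O[atTop] fun k : ℕ ↦ (k : ℝ) :=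
      ((isLittleO_const_id_atTop x).isBigO.comp_tendsto tendsto_natCast_atTop_atTop).add
        (isBigO_refl _ _ |>.const_mul_left (y - x) |>.congr_left fun k ↦ mul_comm _ _)
    exact (hO.comp_tendsto arg_tendsto).trans (arg_isBigO.pow m)
  have pow_isBigO : (fun k : ℕ ↦ r ^ k) =O[atTop] u := by
    refine IsBigO.of_bound (u 0)⁻¹ (Eventually.of_forall fun k ↦ ?_)
    have hu0 : 0 < u 0 := hpos _ (by simpa using hx)
    rw [Real.norm_of_nonneg (by positivity), Real.norm_of_nonneg (hpos _ (by positivity)).le,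
      le_inv_mul_iff₀ hu0, mul_comm]
    exact pow_mul_le k
  exact isLittleO_irrefl (Frequently.of_forall fun k ↦ (by positivity : r ^ k ≠ 0))
    ((pow_isBigO.trans u_isBigO).trans_isLittleO (isLittleO_pow_const_const_pow_of_one_lt m hr))

/-! ### Operator midpoint convexity -/

/-- Operator midpoint convexity of `g` on `(0, ∞)`: convexity of `A ↦ g(A)` along midpoints of
positive definite matrices, of every size. It is applied to the reciprocal of `f`. -/
def OperatorMidpointConvex (g : ℝ → ℝ) : Prop :=
  ∀ (n : ℕ) (A B : Matrix (Fin n) (Fin n) ℂ), A.PosDef → B.PosDef →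
    MLE (cfc g (warith 2⁻¹ A B)) (warith 2⁻¹ (cfc g A) (cfc g B))

section

open scoped MatrixOrder

variable {g : ℝ → ℝ}

lemma div_sq_add_one_le_cfc_diag_re {t : ℝ} (ht : 1 < t) (hg : 0 ≤ g (1 - t⁻¹)) :
    g (t + 1) / (t ^ 2 + 1) ≤
      (cfc g (!![((t + 1 - t⁻¹ : ℝ) : ℂ), 1; 1, 1] : Matrix (Fin 2) (Fin 2) ℂ) 1 1).re := by
  have ht0 : 0 < t := by linarith
  have ht_inv : 0 < t⁻¹ := inv_pos.2 ht0
  have htc : (t : ℂ) ≠ 0 := by exact_mod_cast ht0.ne'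
  rw [cfc_diag_re_of_mul_eq_zero g (a := 1 - t⁻¹) (b := t + 1) ?_ (by linarith) ?_]
  · have first : g (t + 1) / (t + 1 - (1 - t⁻¹)) * (1 - (1 - t⁻¹)) =
        g (t + 1) / (t ^ 2 + 1) := by
      rw [show t + 1 - (1 - t⁻¹) = (t ^ 2 + 1) / t by field_simp; ring]
      field_simp
      ring
    have second : 0 ≤ g (1 - t⁻¹) / (1 - t⁻¹ - (t + 1)) * (1 - (t + 1)) :=
      mul_nonneg_of_nonpos_of_nonpos (div_nonpos_of_nonneg_of_nonpos hg (by linarith))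
        (by linarith)
    change _ ≤ _ * (1 - (1 - t⁻¹)) + _ * (1 - (t + 1))
    rw [first]
    exact le_add_of_nonneg_right second
  · ext i j
    fin_cases i <;> fin_cases j <;> simp
  · ext i j
    fin_cases i <;> fin_cases j <;> simp [Matrix.mul_apply, Fin.sum_univ_two] <;> field_simp <;>
      ring

lemma cfc_diagonal_diag_re {a b : ℝ} (hab : a ≠ b) :
    (cfc g (diagonal ![(a : ℂ), (b : ℂ)]) 1 1).re = g b := by
  rw [cfc_diag_re_of_mul_eq_zero g (a := a) (b := b) ?_ hab ?_]
  · simp [sub_ne_zero.2 hab.symm]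
  · ext i j
    fin_cases i <;> fin_cases j <;> simp
  · ext i j
    fin_cases i <;> fin_cases j <;> simp [Matrix.mul_apply, Fin.sum_univ_two]

lemma posDef_five_two_two_one : (!![5, 2; 2, 1] : Matrix (Fin 2) (Fin 2) ℂ).PosDef := by
  have factor : (!![5, 2; 2, 1] : Matrix (Fin 2) (Fin 2) ℂ) = !![1, 0; 2, 1]ᴴ * !![1, 0; 2, 1] := by
    ext i j
    fin_cases i <;> fin_cases j <;> norm_num [Matrix.mul_apply, Fin.sum_univ_two, map_ofNat]
  have posSemidef : (!![5, 2; 2, 1] : Matrix (Fin 2) (Fin 2) ℂ).PosSemidef :=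
    factor ▸ Matrix.posSemidef_conjTranspose_mul_self _
  rw [posSemidef.posDef_iff_det_ne_zero]
  norm_num [Matrix.det_fin_two]

-- The midpoint has eigenvalues `t + 1` and `1 - t⁻¹`, and the weight of `g (t + 1)` in its lower
-- right entry decays only like `t⁻²`; the corresponding entries of `g(A)` and `g(B)` do not depend
-- on `t`.
lemma OperatorMidpointConvex.apply_add_one_le (hg : OperatorMidpointConvex g)
    (hnonneg : ∀ x, 0 < x → 0 ≤ g x) {t : ℝ} (ht : 3 ≤ t) :
    g (t + 1) ≤ (2⁻¹ * g 1 + 2⁻¹ * (cfc g !![(5 : ℂ), 2; 2, 1] 1 1).re) * (t ^ 2 + 1) := by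
  have ht_inv : t⁻¹ ≤ 3⁻¹ := inv_anti₀ (by norm_num) ht
  let a : ℝ := 2 * t - 3 - 2 * t⁻¹
  let A : Matrix (Fin 2) (Fin 2) ℂ := diagonal ![(a : ℂ), ((1 : ℝ) : ℂ)]
  let B : Matrix (Fin 2) (Fin 2) ℂ := !![5, 2; 2, 1]
  have ha : 1 < a := by
    dsimp only [a]
    linarith
  have hA : A.PosDef := by
    refine Matrix.PosDef.diagonal fun i ↦ ?_
    fin_cases i
    · simpa using one_pos.trans ha
    · simp
  have midpoint : warith 2⁻¹ A B = !![((t + 1 - t⁻¹ : ℝ) : ℂ), 1; 1, 1] := by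
    ext i j
    fin_cases i <;> fin_cases j <;> simp [warith, A, B, a]
    ring
  have entry : (warith 2⁻¹ (cfc g A) (cfc g B) 1 1).re = 2⁻¹ * g 1 + 2⁻¹ * (cfc g B 1 1).re := by
    simp only [warith, Matrix.add_apply, Matrix.smul_apply, Complex.add_re, Complex.smul_re,
      cfc_diagonal_diag_re ha.ne', smul_eq_mul, A]
    norm_num
  rw [← div_le_iff₀ (by positivity)]
  calc g (t + 1) / (t ^ 2 + 1)
      ≤ (cfc g (warith 2⁻¹ A B) 1 1).re := by
        rw [midpoint]
        exact div_sq_add_one_le_cfc_diag_re (by linarith) (hnonneg _ (by linarith))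
    _ ≤ (warith 2⁻¹ (cfc g A) (cfc g B) 1 1).re :=
        diag_re_le_diag_re (mle_iff_le.1 (hg 2 A B hA posDef_five_two_two_one)) 1
    _ = 2⁻¹ * g 1 + 2⁻¹ * (cfc g B 1 1).re := entry

open Asymptotics Filter in
theorem OperatorMidpointConvex.isBigO_sq (hg : OperatorMidpointConvex g)
    (hnonneg : ∀ x, 0 < x → 0 ≤ g x) : g =O[atTop] fun x ↦ x ^ 2 := by
  set C : ℝ := 2⁻¹ * g 1 + 2⁻¹ * (cfc g !![(5 : ℂ), 2; 2, 1] 1 1).re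
  have bound {t : ℝ} (ht : 3 ≤ t) : g (t + 1) ≤ C * (t ^ 2 + 1) := hg.apply_add_one_le hnonneg ht
  have hC : 0 ≤ C :=
    nonneg_of_mul_nonneg_left ((hnonneg _ (by norm_num)).trans (bound le_rfl)) (by norm_num)
  refine IsBigO.of_bound C (eventually_atTop.2 ⟨4, fun x hx ↦ ?_⟩)
  rw [Real.norm_of_nonneg (hnonneg _ (by linarith)), Real.norm_of_nonneg (by positivity)]
  calc g x = g (x - 1 + 1) := by rw [sub_add_cancel]
    _ ≤ C * ((x - 1) ^ 2 + 1) := bound (by linarith)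
    _ ≤ C * x ^ 2 := by
        gcongr
        linarith [show (x - 1) ^ 2 = x ^ 2 - 2 * x + 1 by ring]

variable {n : ℕ} {A D : Matrix (Fin n) (Fin n) ℂ}

lemma OperatorMidpointConvex.cfc_add_le (hg : OperatorMidpointConvex g) (hA : A.PosDef)
    (hD : D.PosSemidef) (k : ℕ) :
    cfc g (A + D) ≤
      (1 - 2⁻¹ ^ k : ℝ) • cfc g A + (2⁻¹ ^ k : ℝ) • cfc g (A + (2 ^ k : ℝ) • D) := by
  induction k with
  | zero => simp
  | succ k ih =>
    have midpoint : A + (2 ^ k : ℝ) • D = warith 2⁻¹ A (A + (2 ^ (k + 1) : ℝ) • D) := by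
      rw [warith]
      module
    have convex := mle_iff_le.1 (hg n A (A + (2 ^ (k + 1) : ℝ) • D) hA
      (hA.add_posSemidef (hD.smul (by positivity))))
    rw [← midpoint] at convex
    calc cfc g (A + D)
        ≤ (1 - 2⁻¹ ^ k : ℝ) • cfc g A + (2⁻¹ ^ k : ℝ) • cfc g (A + (2 ^ k : ℝ) • D) := ih
      _ ≤ (1 - 2⁻¹ ^ k : ℝ) • cfc g A + (2⁻¹ ^ k : ℝ) •
            warith 2⁻¹ (cfc g A) (cfc g (A + (2 ^ (k + 1) : ℝ) • D)) := by gcongr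
      _ = (1 - 2⁻¹ ^ (k + 1) : ℝ) • cfc g A +
            (2⁻¹ ^ (k + 1) : ℝ) • cfc g (A + (2 ^ (k + 1) : ℝ) • D) := by
          rw [warith]
          module

open Filter Topology in
theorem OperatorMidpointConvex.operatorAntitone (hg : OperatorMidpointConvex g)
    (hanti : AntitoneOn g (Set.Ioi 0)) : OperatorAntitone g := by
  intro n A B hA _ hAB
  have hD : (B - A).PosSemidef := hAB
  obtain ⟨a, ha, haA⟩ := exists_pos_smul_one_le hA
  have bound (k : ℕ) :
      cfc g B ≤ (1 - 2⁻¹ ^ k : ℝ) • cfc g A + (2⁻¹ ^ k : ℝ) • g a • 1 := by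
    have hkD : ((2 ^ k : ℝ) • (B - A)).PosSemidef := hD.smul (by positivity)
    have tail : cfc g (A + (2 ^ k : ℝ) • (B - A)) ≤ g a • 1 :=
      cfc_le_smul_one_of_antitoneOn hanti ha (hA.add_posSemidef hkD).isHermitian
        (haA.trans (le_add_of_nonneg_right hkD.nonneg))
    calc cfc g B = cfc g (A + (B - A)) := by rw [add_sub_cancel]
      _ ≤ _ := hg.cfc_add_le hA hD k
      _ ≤ _ := by gcongr
  have pow_tendsto : Tendsto (fun k : ℕ ↦ (2⁻¹ ^ k : ℝ)) atTop (𝓝 0) :=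
    tendsto_pow_atTop_nhds_zero_of_lt_one (by norm_num) (by norm_num)
  open scoped Matrix.Norms.L2Operator in
  refine mle_iff_le.2 (ge_of_tendsto' (x := atTop) ?_ bound)
  simpa using ((pow_tendsto.const_sub 1).smul_const (cfc g A)).add
    (pow_tendsto.smul_const (g a • (1 : Matrix (Fin n) (Fin n) ℂ)))

end

/-! ### The geometric midpoint inequality -/

/-- The midpoint inequality `f(A) # f(B) ≤ f(A ∇ B)` between geometric and arithmetic means, for
positive definite matrices of every size. -/
def OperatorMidpointGeomConcave (f : ℝ → ℝ) : Prop :=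
  ∀ (n : ℕ) (A B : Matrix (Fin n) (Fin n) ℂ), A.PosDef → B.PosDef →
    MLE (wgeom 2⁻¹ (cfc f A) (cfc f B)) (cfc f ((2⁻¹ : ℝ) • (A + B)))

section

open scoped MatrixOrder

variable {f : ℝ → ℝ}

theorem OperatorMonotone.operatorMidpointGeomConcave (hf : OperatorMonotone f)
    (hpos : ∀ x, 0 < x → 0 < f x) : OperatorMidpointGeomConcave f := by
  intro n A B hA hB
  rw [mle_iff_le, ← warith_two_inv]
  calc wgeom 2⁻¹ (cfc f A) (cfc f B)
      ≤ warith 2⁻¹ (cfc f A) (cfc f B) :=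
        wgeom_le_warith (cfc_posDef hpos hA) (cfc_posDef hpos hB) (by norm_num) (by norm_num)
    _ ≤ cfc f (warith 2⁻¹ A B) :=
        hf.warith_cfc_le_cfc_warith hpos hA hB (by norm_num) (by norm_num)

lemma OperatorMidpointGeomConcave.operatorMidpointConvex_inv (hf : OperatorMidpointGeomConcave f)
    (hpos : ∀ x, 0 < x → 0 < f x) : OperatorMidpointConvex fun x ↦ (f x)⁻¹ := by
  intro n A B hA hB
  have hfA := cfc_posDef hpos hA
  have hfB := cfc_posDef hpos hB
  rw [mle_iff_le, cfc_inv_of_posDef hpos hA, cfc_inv_of_posDef hpos hB,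
    cfc_inv_of_posDef hpos (warith_posDef hA hB (by norm_num) (by norm_num)), warith_two_inv]
  calc (cfc f ((2⁻¹ : ℝ) • (A + B)))⁻¹
      ≤ (wgeom 2⁻¹ (cfc f A) (cfc f B))⁻¹ :=
        inv_le_inv_of_posDef (wgeom_posDef hfA hfB _) (hf n A B hA hB)
    _ = wgeom 2⁻¹ (cfc f A)⁻¹ (cfc f B)⁻¹ := (wgeom_inv hfA hfB _).symm
    _ ≤ warith 2⁻¹ (cfc f A)⁻¹ (cfc f B)⁻¹ :=
        wgeom_le_warith hfA.inv hfB.inv (by norm_num) (by norm_num)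

lemma OperatorMidpointGeomConcave.mul_le_apply_midpoint_sq (hf : OperatorMidpointGeomConcave f)
    (hpos : ∀ x, 0 < x → 0 < f x) {x y : ℝ} (hx : 0 < x) (hy : 0 < y) :
    f x * f y ≤ f ((x + y) / 2) ^ 2 := by
  have rpow_mul_rpow_le : f x ^ (1 - 2⁻¹ : ℝ) * f y ^ (2⁻¹ : ℝ) ≤ f (2⁻¹ * (x + y)) := by
    have := hf 1 (x • 1) (y • 1) (Matrix.PosDef.one.smul hx) (Matrix.PosDef.one.smul hy)
    rwa [mle_iff_le, ← add_smul, smul_smul, cfc_smul_one, cfc_smul_one, cfc_smul_one,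
      wgeom_smul_one (hpos x hx) (hpos y hy), smul_one_le_smul_one_iff] at this
  have sqrt_le : √(f x * f y) ≤ f ((x + y) / 2) := by
    rw [Real.sqrt_mul (hpos x hx).le, Real.sqrt_eq_rpow, Real.sqrt_eq_rpow]
    convert rpow_mul_rpow_le using 2 <;> ring_nf
  exact (Real.sqrt_le_left (hpos _ (by linarith)).le).1 sqrt_le

lemma OperatorMidpointGeomConcave.antitoneOn_inv (hf : OperatorMidpointGeomConcave f)
    (hpos : ∀ x, 0 < x → 0 < f x) : AntitoneOn (fun x ↦ (f x)⁻¹) (Set.Ioi 0) := by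
  have hpos_inv (x : ℝ) (hx : 0 < x) : 0 < (f x)⁻¹ := inv_pos.2 (hpos x hx)
  have log_convex (x y : ℝ) (hx : 0 < x) (hy : 0 < y) :
      (f ((x + y) / 2))⁻¹ ^ 2 ≤ (f x)⁻¹ * (f y)⁻¹ := by
    rw [inv_pow, ← mul_inv]
    exact inv_anti₀ (mul_pos (hpos x hx) (hpos y hy)) (hf.mul_le_apply_midpoint_sq hpos hx hy)
  exact antitoneOn_of_midpoint_sq_le_mul_of_isBigO hpos_inv log_convex
    ((hf.operatorMidpointConvex_inv hpos).isBigO_sq fun x hx ↦ (hpos_inv x hx).le)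

lemma operatorMonotone_of_operatorAntitone_inv (hpos : ∀ x, 0 < x → 0 < f x)
    (hf : OperatorAntitone fun x ↦ (f x)⁻¹) : OperatorMonotone f := by
  have inv_cfc_inv {n : ℕ} {C : Matrix (Fin n) (Fin n) ℂ} (hC : C.PosDef) :
      (cfc (fun x ↦ (f x)⁻¹) C)⁻¹ = cfc f C := by
    simpa only [inv_inv] using (cfc_inv_of_posDef (fun x hx ↦ inv_pos.2 (hpos x hx)) hC).symm
  intro n A B hA hB hAB
  rw [mle_iff_le, ← inv_cfc_inv hA, ← inv_cfc_inv hB]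
  exact inv_le_inv_of_posDef (cfc_posDef (fun x hx ↦ inv_pos.2 (hpos x hx)) hB)
    (hf n A B hA hB hAB)

end

theorem stmt_3_general (f : ℝ → ℝ) (hpos : ∀ x, 0 < x → 0 < f x) :
    OperatorMonotone f ↔
      ∀ (n : ℕ) (A B : Matrix (Fin n) (Fin n) ℂ), A.PosDef → B.PosDef →
        MLE (wgeom 2⁻¹ (cfc f A) (cfc f B)) (cfc f ((2⁻¹ : ℝ) • (A + B))) := by
  refine ⟨fun hf ↦ hf.operatorMidpointGeomConcave hpos,
    fun hf : OperatorMidpointGeomConcave f ↦ ?_⟩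
  have inv_antitone : OperatorAntitone fun x ↦ (f x)⁻¹ :=
    (hf.operatorMidpointConvex_inv hpos).operatorAntitone (hf.antitoneOn_inv hpos)
  exact operatorMonotone_of_operatorAntitone_inv hpos inv_antitone

theorem stmt_3 (f : ℝ → ℝ) (hf : ContinuousOn f (Set.Ioi 0))
    (hf' : ∀ x ∈ Set.Ioi (0:ℝ), f x ∈ Set.Ioi (0:ℝ)) :
    OperatorMonotone f ↔
      ∀ (n : ℕ) (A B : Matrix (Fin n) (Fin n) ℂ), A.PosDef → B.PosDef →
        MLE (wgeom 2⁻¹ (cfc f A) (cfc f B)) (cfc f ((2⁻¹ : ℝ) • (A + B))) :=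
  stmt_3_general f hf'
end
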